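/- Let A be a symmetric positive definite 2×2 real matrix, let v ≠ w be points of ℝ², γ(t) = v + t(w−v), n the unit vector obtained by rotating (w−v)/‖w−v‖ clockwise by 90 degrees, v' = A^{-1/2}v, w' = A^{-1/2}w, γ'(t) = v' + t(w'−v'). Define ψ^A(η) = −(‖w−v‖/(2π√(det A))) ∫₀¹ log √((γ(t)−η)ᵀ A⁻¹ (γ(t)−η)) dt for η ∉ {γ(t) : t ∈ [0,1]}, and ψ(y) = −(‖w'−v'‖/(2π)) ∫₀¹ log ‖γ'(t)−y‖ dt for y ∉ {γ'(t) : t ∈ [0,1]}. Then for every η ∉ {γ(t) : t ∈ [0,1]}, both functions are differentiable at the relevant points and ∇ψ^A(η) = (1/√(nᵀ A n)) · A^{-1/2} (∇ψ)(A^{-1/2}η). -/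

import Mathlib

open Matrix Real MeasureTheory

/-- The quadratic form `xᵀ M x` associated to a `d × d` matrix. -/
noncomputable def quadForm {d : ℕ} (M : Matrix (Fin d) (Fin d) ℝ)
    (x : EuclideanSpace ℝ (Fin d)) : ℝ :=
  ∑ i, ∑ j, x i * M i j * x j

/-- Matrix-vector multiplication, acting on Euclidean space. -/
noncomputable def matVec {d : ℕ} (M : Matrix (Fin d) (Fin d) ℝ)
    (x : EuclideanSpace ℝ (Fin d)) : EuclideanSpace ℝ (Fin d)  :=
  Matrix.toEuclideanLin M x

/-- Rotation of a vector in `ℝ²` clockwise by 90 degrees: `(x₁, x₂) ↦ (x₂, −x₁)`. -/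
noncomputable def rotCW (x : EuclideanSpace ℝ (Fin 2)) : EuclideanSpace ℝ (Fin 2) :=
  (EuclideanSpace.equiv (Fin 2) ℝ).symm ![x 1, -x 0]

/-! With `B Bᵀ = A` one has `√(xᵀ A⁻¹ x) = ‖B⁻¹ x‖`, so the anisotropic logarithmic kernel is the
isotropic one in the coordinates `B⁻¹ x`, and `ψ^A` is a constant multiple of `ψ ∘ B⁻¹`. The
constant is the ratio of the lengths of the two segments divided by `√(det A)`; it equals
`1 / √(nᵀ A n)`, since in the plane conjugating a symmetric `A` by a quarter turn gives
`adj A = det A · A⁻¹`. The gradient formula is then the chain rule, and `ψ` is differentiable off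
the segment by differentiation under the integral. -/

section QuadraticForms

variable {d : ℕ}

theorem inner_matVec_left (M : Matrix (Fin d) (Fin d) ℝ) (x y : EuclideanSpace ℝ (Fin d)) :
    inner ℝ (matVec M x) y = inner ℝ x (matVec Mᵀ y) := by
  rw [matVec, matVec, ← conjTranspose_eq_transpose_of_trivial,
    toEuclideanLin_conjTranspose_eq_adjoint, LinearMap.adjoint_inner_right]

theorem matVec_mul (M N : Matrix (Fin d) (Fin d) ℝ) (x : EuclideanSpace ℝ (Fin d)) :
    matVec (M * N) x = matVec M (matVec N x) := by
  rw [matVec, toLpLin_mul_same]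
  rfl

theorem matVec_sub (M : Matrix (Fin d) (Fin d) ℝ) (x y : EuclideanSpace ℝ (Fin d)) :
    matVec M (x - y) = matVec M x - matVec M y :=
  map_sub _ x y

theorem matVec_add_smul_sub (M : Matrix (Fin d) (Fin d) ℝ) (v w : EuclideanSpace ℝ (Fin d))
    (t : ℝ) :
    matVec M (v + t • (w - v)) = matVec M v + t • (matVec M w - matVec M v) := by
  simp only [matVec, map_add, map_smul, map_sub]

theorem matVec_inv_injective {B : Matrix (Fin d) (Fin d) ℝ} (hB : IsUnit B.det) :
    Function.Injective (matVec B⁻¹) :=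
  Function.LeftInverse.injective (g := matVec B) fun x => by
    rw [← matVec_mul, mul_nonsing_inv B hB]
    simp [matVec]

theorem quadForm_eq_inner (M : Matrix (Fin d) (Fin d) ℝ) (x : EuclideanSpace ℝ (Fin d)) :
    quadForm M x = inner ℝ x (matVec M x) := by
  simp only [quadForm, matVec, toLpLin_apply, PiLp.inner_apply, mulVec, dotProduct,
    RCLike.inner_apply, conj_trivial, Finset.sum_mul]
  exact Finset.sum_congr rfl fun i _ => Finset.sum_congr rfl fun j _ => by ring

theorem quadForm_smul_left (c : ℝ) (M : Matrix (Fin d) (Fin d) ℝ)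
    (x : EuclideanSpace ℝ (Fin d)) : quadForm (c • M) x = c * quadForm M x := by
  simp only [quadForm_eq_inner, matVec, map_smul, LinearMap.smul_apply, real_inner_smul_right]

theorem quadForm_transpose_mul_self (M : Matrix (Fin d) (Fin d) ℝ)
    (x : EuclideanSpace ℝ (Fin d)) : quadForm (Mᵀ * M) x = ‖matVec M x‖ ^ 2 := by
  rw [quadForm_eq_inner, matVec_mul, ← inner_matVec_left, real_inner_self_eq_norm_sq]

theorem quadForm_inv_mul_transpose (B : Matrix (Fin d) (Fin d) ℝ)
    (x : EuclideanSpace ℝ (Fin d)) : quadForm (B * Bᵀ)⁻¹ x = ‖matVec B⁻¹ x‖ ^ 2 := by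
  rw [Matrix.mul_inv_rev, ← transpose_nonsing_inv, quadForm_transpose_mul_self]

theorem quadForm_rotCW (M : Matrix (Fin 2) (Fin 2) ℝ) (x : EuclideanSpace ℝ (Fin 2)) :
    quadForm M (rotCW x) = quadForm M.adjugate x := by
  simp only [quadForm, rotCW, Fin.isValue, PiLp.continuousLinearEquiv_symm_apply,
    Fin.sum_univ_two, cons_val_zero, cons_val_one, cons_val_fin_one, adjugate_fin_two, of_apply,
    cons_val']
  ring

theorem sqrt_quadForm_mul_transpose_rotCW {B : Matrix (Fin 2) (Fin 2) ℝ} (hB : IsUnit B.det)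
    (x : EuclideanSpace ℝ (Fin 2)) :
    √(quadForm (B * Bᵀ) (rotCW x)) = √(B * Bᵀ).det * ‖matVec B⁻¹ x‖ := by
  have det_sq : (B * Bᵀ).det = B.det ^ 2 := by rw [det_mul, det_transpose, sq]
  have det_ne_zero : (B * Bᵀ).det ≠ 0 := det_sq ▸ pow_ne_zero 2 hB.ne_zero
  have adjugate_eq : (B * Bᵀ).adjugate = (B * Bᵀ).det • (B * Bᵀ)⁻¹ := by
    rw [inv_def, Ring.inverse_eq_inv', smul_inv_smul₀ det_ne_zero]
  rw [quadForm_rotCW, adjugate_eq, quadForm_smul_left, quadForm_inv_mul_transpose,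
    sqrt_mul (det_sq ▸ sq_nonneg _), sqrt_sq (norm_nonneg _)]

end QuadraticForms

section LogarithmicIntegral

variable {E : Type*} [NormedAddCommGroup E] [InnerProductSpace ℝ E]

theorem hasFDerivAt_log_norm {x : E} (hx : x ≠ 0) :
    HasFDerivAt (fun z : E => log ‖z‖) ((‖x‖ ^ 2)⁻¹ • innerSL ℝ x) x := by
  have log_norm_eq : (fun z : E => log ‖z‖) = fun z => (1 / 2 : ℝ) * log (‖z‖ ^ 2) := by
    funext z
    rw [log_pow]
    push_cast
    ring
  have log_norm_sq := ((hasFDerivAt_id x).norm_sq.log (by simpa using hx)).const_mul (1 / 2 : ℝ)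
  rw [log_norm_eq]
  refine log_norm_sq.congr_fderiv ?_
  ext z
  simp only [one_div, id_eq, ContinuousLinearMap.comp_id, _root_.smul_apply, coe_innerSL_apply,
    nsmul_eq_mul, Nat.cast_ofNat, smul_eq_mul]
  ring

theorem norm_inv_norm_sq_smul_innerSL (x : E) : ‖(‖x‖ ^ 2)⁻¹ • innerSL ℝ x‖ = ‖x‖⁻¹ := by
  rw [norm_smul, innerSL_apply_norm, norm_inv, norm_pow, norm_norm, sq, mul_inv]
  simpa only [inv_inv] using mul_self_mul_inv ‖x‖⁻¹

theorem hasFDerivAt_integral_log_norm_sub {X : Type*} [MeasurableSpace X] {μ : Measure X}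
    [IsFiniteMeasure μ] {g : X → E} {y : E} {ε : ℝ} (hg : AEStronglyMeasurable g μ)
    (hint : Integrable (fun t => log ‖g t - y‖) μ) (hε : 0 < ε)
    (hfar : ∀ᵐ t ∂μ, ε ≤ ‖g t - y‖) :
    HasFDerivAt (fun z => ∫ t, log ‖g t - z‖ ∂μ)
      (∫ t, -((‖g t - y‖ ^ 2)⁻¹ • innerSL ℝ (g t - y)) ∂μ) y := by
  have hfar_ball : ∀ᵐ t ∂μ, ∀ z ∈ Metric.ball y (ε / 2), ε / 2 ≤ ‖g t - z‖ := by
    filter_upwards [hfar] with t ht z hz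
    rw [mem_ball_iff_norm] at hz
    linarith [norm_sub_le_norm_sub_add_norm_sub (g t) z y]
  have hmeas (z : E) : AEStronglyMeasurable (fun t => g t - z) μ :=
    hg.sub aestronglyMeasurable_const
  refine hasFDerivAt_integral_of_dominated_of_fderiv_le
    (F' := fun z t => -((‖g t - z‖ ^ 2)⁻¹ • innerSL ℝ (g t - z))) (bound := fun _ => (ε / 2)⁻¹)
    (Metric.ball_mem_nhds y (half_pos hε))
    (.of_forall fun z => (hmeas z).norm.aemeasurable.log.aestronglyMeasurable) hint
    ?_ ?_ (integrable_const _) ?_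
  · exact (((hmeas y).norm.pow 2).aemeasurable.inv.aestronglyMeasurable.smul
      ((innerSL ℝ).continuous.comp_aestronglyMeasurable (hmeas y))).neg
  · filter_upwards [hfar_ball] with t ht z hz
    rw [norm_neg, norm_inv_norm_sq_smul_innerSL]
    exact inv_anti₀ (half_pos hε) (ht z hz)
  · filter_upwards [hfar_ball] with t ht z hz
    have hne : g t - z ≠ 0 := norm_pos_iff.mp ((half_pos hε).trans_le (ht z hz))
    exact ((hasFDerivAt_log_norm hne).comp z ((hasFDerivAt_id z).const_sub (g t))).congr_fderiv
      (by ext; simp)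

theorem differentiableAt_setIntegral_log_norm_sub {X : Type*} [TopologicalSpace X] [T2Space X]
    [MeasurableSpace X] [OpensMeasurableSpace X] {μ : Measure X} [IsFiniteMeasureOnCompacts μ]
    {K : Set X} {g : X → E} {y : E} (hK : IsCompact K) (hg : ContinuousOn g K)
    (hy : y ∉ g '' K) : DifferentiableAt ℝ (fun z => ∫ t in K, log ‖g t - z‖ ∂μ) y := by
  have : IsFiniteMeasure (μ.restrict K) := isFiniteMeasure_restrict.mpr hK.measure_ne_top
  obtain ⟨ε, hε, hball⟩ := Metric.isOpen_iff.mp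
    (hK.image_of_continuousOn hg).isClosed.isOpen_compl y hy
  have hfar : ∀ t ∈ K, ε ≤ ‖g t - y‖ := fun t ht => by
    by_contra! hlt
    exact hball (mem_ball_iff_norm.mpr hlt) ⟨t, ht, rfl⟩
  have hlog : ContinuousOn (fun t => log ‖g t - y‖) K :=
    (hg.sub continuousOn_const).norm.log fun t ht => (hε.trans_le (hfar t ht)).ne'
  exact (hasFDerivAt_integral_log_norm_sub
    (hg.aestronglyMeasurable_of_isCompact hK hK.measurableSet)
    (hlog.integrableOn_compact hK) hε
    (ae_restrict_of_forall_mem hK.measurableSet hfar)).differentiableAt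

/-- The single layer potential `ψ(y) = -(1 / 2π) ∫ log ‖x - y‖ ds(x)` of the segment from `v` to
`w`, with arc length written in the parameter `t ∈ [0, 1]`. -/
noncomputable def segmentLogPotential (v w y : E) : ℝ :=
  -(‖w - v‖ / (2 * π)) * ∫ t in (0 : ℝ)..1, log ‖v + t • (w - v) - y‖

theorem differentiableAt_segmentLogPotential {v w y : E}
    (hy : y ∉ (fun t : ℝ => v + t • (w - v)) '' Set.Icc (0 : ℝ) 1) :
    DifferentiableAt ℝ (segmentLogPotential v w) y := by
  unfold segmentLogPotential
  simp only [intervalIntegral.integral_of_le zero_le_one, ← integral_Icc_eq_integral_Ioc]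
  exact (differentiableAt_setIntegral_log_norm_sub isCompact_Icc (by fun_prop) hy).const_mul _

end LogarithmicIntegral

/-- The single layer potential `ψ^A` of the segment from `v` to `w` for the anisotropic kernel
`-(1 / (2π √(det A))) log √(xᵀ A⁻¹ x)`. -/
noncomputable def anisotropicSegmentLogPotential (A : Matrix (Fin 2) (Fin 2) ℝ)
    (v w η : EuclideanSpace ℝ (Fin 2)) : ℝ :=
  -(‖w - v‖ / (2 * π * √A.det)) *
    ∫ t in (0 : ℝ)..1, log √(quadForm A⁻¹ (v + t • (w - v) - η))

theorem sqrt_quadForm_mul_transpose_unit_normal {B : Matrix (Fin 2) (Fin 2) ℝ}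
    (hB : IsUnit B.det) (v w : EuclideanSpace ℝ (Fin 2)) :
    √(quadForm (B * Bᵀ) (rotCW (‖w - v‖⁻¹ • (w - v)))) =
      ‖w - v‖⁻¹ * (√(B * Bᵀ).det * ‖matVec B⁻¹ w - matVec B⁻¹ v‖) := by
  rw [sqrt_quadForm_mul_transpose_rotCW hB, ← matVec_sub, matVec, map_smul, norm_smul, norm_inv,
    norm_norm]
  exact mul_left_comm _ _ _

theorem anisotropicSegmentLogPotential_mul_transpose {B : Matrix (Fin 2) (Fin 2) ℝ}
    (hB : IsUnit B.det) {v w : EuclideanSpace ℝ (Fin 2)} (hvw : v ≠ w)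
    (η : EuclideanSpace ℝ (Fin 2)) :
    anisotropicSegmentLogPotential (B * Bᵀ) v w η =
      1 / √(quadForm (B * Bᵀ) (rotCW (‖w - v‖⁻¹ • (w - v)))) *
        segmentLogPotential (matVec B⁻¹ v) (matVec B⁻¹ w) (matVec B⁻¹ η) := by
  have hlength : ‖matVec B⁻¹ w - matVec B⁻¹ v‖ ≠ 0 :=
    norm_ne_zero_iff.mpr (sub_ne_zero.mpr ((matVec_inv_injective hB).ne hvw.symm))
  have hkernel (x : EuclideanSpace ℝ (Fin 2)) : √(quadForm (B * Bᵀ)⁻¹ x) = ‖matVec B⁻¹ x‖ := by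
    rw [quadForm_inv_mul_transpose, sqrt_sq (norm_nonneg _)]
  simp only [anisotropicSegmentLogPotential, segmentLogPotential, hkernel, matVec_sub _ _ η,
    matVec_add_smul_sub, sqrt_quadForm_mul_transpose_unit_normal hB]
  field_simp

theorem hasGradientAt_const_mul_comp_matVec {d : ℕ} {f : EuclideanSpace ℝ (Fin d) → ℝ}
    {f' x : EuclideanSpace ℝ (Fin d)} (c : ℝ) (M : Matrix (Fin d) (Fin d) ℝ)
    (hf : HasGradientAt f f' (matVec M x)) :
    HasGradientAt (fun z => c * f (matVec M z)) (c • matVec Mᵀ f') x := by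
  have hM : HasFDerivAt (matVec M) (toEuclideanCLM (𝕜 := ℝ) M) x :=
    (toEuclideanCLM (𝕜 := ℝ) M).hasFDerivAt
  refine ((hf.hasFDerivAt.comp x hM).const_mul c).congr_fderiv ?_
  ext z
  rw [InnerProductSpace.toDual_apply_apply, real_inner_smul_left, inner_matVec_left,
    transpose_transpose]
  rfl

theorem anisotropic_neumann_gradient_transform_2d_general
    (A B : Matrix (Fin 2) (Fin 2) ℝ) (hB : IsUnit B.det) (hBA : B * Bᵀ = A)
    (v w : EuclideanSpace ℝ (Fin 2)) (hvw : v ≠ w)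
    (n : EuclideanSpace ℝ (Fin 2)) (hn : n = rotCW (‖w - v‖⁻¹ • (w - v)))
    (v' w' : EuclideanSpace ℝ (Fin 2)) (hv' : v' = matVec B⁻¹ v) (hw' : w' = matVec B⁻¹ w)
    (ψA ψI : EuclideanSpace ℝ (Fin 2) → ℝ)
    (hψA : ∀ η, ψA η = -(‖w - v‖ / (2 * π * √A.det)) *
      ∫ t in (0 : ℝ)..1, log √(quadForm A⁻¹ (v + t • (w - v) - η)))
    (hψI : ∀ y, ψI y = -(‖w' - v'‖ / (2 * π)) *
      ∫ t in (0 : ℝ)..1, log ‖v' + t • (w' - v') - y‖)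
    (η : EuclideanSpace ℝ (Fin 2))
    (hη : η ∉ (fun t : ℝ => v + t • (w - v)) '' Set.Icc (0 : ℝ) 1) :
    DifferentiableAt ℝ ψA η ∧ DifferentiableAt ℝ ψI (matVec B⁻¹ η) ∧
      gradient ψA η =
        (1 / √(quadForm A n)) • matVec B⁻¹ᵀ (gradient ψI (matVec B⁻¹ η)) := by
  subst hBA hn hv' hw'
  obtain rfl : ψI = segmentLogPotential (matVec B⁻¹ v) (matVec B⁻¹ w) := funext hψI
  obtain rfl : ψA = anisotropicSegmentLogPotential (B * Bᵀ) v w := funext hψA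
  have hη' : matVec B⁻¹ η ∉ (fun t : ℝ => matVec B⁻¹ v + t • (matVec B⁻¹ w - matVec B⁻¹ v)) ''
      Set.Icc (0 : ℝ) 1 := by
    simpa only [← matVec_add_smul_sub, ← Set.image_image,
      (matVec_inv_injective hB).mem_set_image] using hη
  have hψI_diff := differentiableAt_segmentLogPotential hη'
  have hgrad := hasGradientAt_const_mul_comp_matVec
    (1 / √(quadForm (B * Bᵀ) (rotCW (‖w - v‖⁻¹ • (w - v))))) B⁻¹ hψI_diff.hasGradientAt
  rw [← funext (anisotropicSegmentLogPotential_mul_transpose hB hvw)] at hgrad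
  exact ⟨hgrad.differentiableAt, hψI_diff, hgrad.gradient⟩

/-- Let `A` be symmetric positive definite with symmetric positive definite
square root `B = A^{1/2}` (so `A^{-1/2} = B⁻¹`). Let `γ(t) = v + t(w−v)` with unit normal `n`,
`v' = A^{-1/2}v`, `w' = A^{-1/2}w`, `γ'(t) = v' + t(w'−v')`. Define
`ψ^A(η) = −(‖w−v‖/(2π√det A)) ∫₀¹ log √((γ(t)−η)ᵀA⁻¹(γ(t)−η)) dt` and
`ψ(y) = −(‖w'−v'‖/(2π)) ∫₀¹ log ‖γ'(t)−y‖ dt`. Then for every `η` off the closed segment,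
both functions are differentiable at the relevant points and
`∇ψ^A(η) = (1/√(nᵀAn)) A^{-1/2} (∇ψ)(A^{-1/2}η)`. -/
theorem anisotropic_neumann_gradient_transform_2d
    (A B : Matrix (Fin 2) (Fin 2) ℝ)
    (hA : A.PosDef) (hAsymm : A.IsSymm)
    (hB : B.PosDef) (hBsymm : B.IsSymm) (hBA : B * B = A)
    (v w : EuclideanSpace ℝ (Fin 2)) (hvw : v ≠ w)
    (n : EuclideanSpace ℝ (Fin 2)) (hn : n = rotCW (‖w - v‖⁻¹ • (w - v)))
    (v' w' : EuclideanSpace ℝ (Fin 2)) (hv' : v' = matVec B⁻¹ v) (hw' : w' = matVec B⁻¹ w)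
    (ψA ψI : EuclideanSpace ℝ (Fin 2) → ℝ)
    (hψA : ∀ η, ψA η = -(‖w - v‖ / (2 * π * Real.sqrt A.det)) *
      ∫ t in (0:ℝ)..1, Real.log (Real.sqrt (quadForm A⁻¹ (v + t • (w - v) - η))))
    (hψI : ∀ y, ψI y = -(‖w' - v'‖ / (2 * π)) *
      ∫ t in (0:ℝ)..1, Real.log ‖v' + t • (w' - v') - y‖) :
    ∀ η : EuclideanSpace ℝ (Fin 2),
      η ∉ (fun t : ℝ => v + t • (w - v)) '' Set.Icc (0 : ℝ) 1 →
      DifferentiableAt ℝ ψA η ∧ DifferentiableAt ℝ ψI (matVec B⁻¹ η) ∧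
        gradient ψA η =
          (1 / Real.sqrt (quadForm A n)) • matVec B⁻¹ (gradient ψI (matVec B⁻¹ η)) := by
  have hBt : B⁻¹ᵀ = B⁻¹ := by rw [transpose_nonsing_inv, hBsymm.eq]
  simpa only [hBt] using anisotropic_neumann_gradient_transform_2d_general A B
    hB.det_pos.ne'.isUnit (hBsymm.eq.symm ▸ hBA) v w hvw n hn v' w' hv' hw' ψA ψI hψA hψI
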